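/- Let R = [k,l] × [m,n] be a closed rectangle in ℝ² with k < l and m < n, and let p, q ∈ (1,∞) satisfy 1/p + 1/q < 1. Then there exist continuous functions G, H : R × R → [0,∞) depending only on R, p, q, which are symmetric (G(P,Q) = G(Q,P) and H(P,Q) = H(Q,P)) and vanish on the diagonal (G(P,P) = H(P,P) = 0), such that for every u ∈ C¹(R) and all points P = (w,x), Q = (w',x') in R, |u(w,x) − u(w',x')| ≤ ‖∂u/∂x‖_{L^p(R)} · G(P,Q) + ‖∂u/∂y‖_{L^q(R)} · H(P,Q). -/

import Mathlib

open MeasureTheory Set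

open scoped ENNReal ProbabilityTheory

/-!
Morrey's argument along curves adapted to the integrability exponents. Join `x` to a point `z` of
the box by the curve with coordinates `x i + t ^ α i * (z i - x i)` and average over `z`. The speed
of the curve in direction `i` is `O(t ^ (α i - 1))`, while undoing the dilation `z ↦ x i + t ^ α i *
(z i - x i)` costs a factor `t ^ (-(∑ j, α j) / p i)` in `L ^ (p i)`. As soon as `∑ i, 1 / p i < 1`,
the `α i` can be chosen so that these powers cancel for every `i`, and the oscillation over the box
is bounded by the `L ^ (p i)` norms of the partial derivatives. Applying this to the smallest box of
side lengths `s ^ α i * (b i - a i)` that contains two given points, the same cancellation leaves a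
bound linear in `s`, which tends to `0` as the points approach each other.
-/

section Dilation

variable {ι : Type*} {a b α x z : ι → ℝ} {t : ℝ}

/-- The anisotropic dilation about `x`: the `i`-th coordinate of `z - x` is scaled by `t ^ α i`.
For fixed `z` it is a curve from `x` (at `t = 0`) to `z` (at `t = 1`); for fixed `t > 0` it is an
affine change of variables. -/
noncomputable def anisotropicDilation (α x : ι → ℝ) (t : ℝ) (z : ι → ℝ) : ι → ℝ :=
  fun i ↦ x i + t ^ α i * (z i - x i)

lemma anisotropicDilation_zero (hα : ∀ i, α i ≠ 0) : anisotropicDilation α x 0 z = x := by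
  ext i
  simp [anisotropicDilation, Real.zero_rpow (hα i)]

lemma anisotropicDilation_one : anisotropicDilation α x 1 z = z := by
  ext i
  simp [anisotropicDilation]

lemma anisotropicDilation_mem_Icc (hα : ∀ i, 0 ≤ α i) (hx : x ∈ Icc a b) (hz : z ∈ Icc a b)
    (ht : t ∈ Icc (0 : ℝ) 1) : anisotropicDilation α x t z ∈ Icc a b := by
  rw [← pi_univ_Icc] at hx hz ⊢
  intro i hi
  exact (convex_Icc (a i) (b i)).add_smul_sub_mem (hx i hi) (hz i hi)
    ⟨Real.rpow_nonneg ht.1 _, Real.rpow_le_one ht.1 ht.2 (hα i)⟩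

lemma continuous_anisotropicDilation (hα : ∀ i, 0 ≤ α i) :
    Continuous fun w : (ι → ℝ) × ℝ ↦ anisotropicDilation α x w.2 w.1 :=
  continuous_pi fun i ↦ continuous_const.add <|
    ((Real.continuous_rpow_const (hα i)).comp continuous_snd).mul (by fun_prop)

lemma hasDerivAt_anisotropicDilation (hα : ∀ i, 1 ≤ α i) (t : ℝ) :
    HasDerivAt (fun t ↦ anisotropicDilation α x t z)
      (fun i ↦ α i * t ^ (α i - 1) * (z i - x i)) t :=
  hasDerivAt_pi.2 fun i ↦
    ((Real.hasDerivAt_rpow_const (.inr (hα i))).mul_const (z i - x i)).const_add (x i)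

variable [Fintype ι]

lemma contDiff_anisotropicDilation (hα : ∀ i, 1 ≤ α i) :
    ContDiff ℝ 1 fun t ↦ anisotropicDilation α x t z :=
  contDiff_pi.2 fun i ↦ contDiff_const.add <|
    (Real.contDiff_rpow_const_of_le (n := 1) (by exact_mod_cast hα i)).mul contDiff_const

lemma map_anisotropicDilation_volume (α x : ι → ℝ) (ht : 0 < t) :
    Measure.map (anisotropicDilation α x t) volume
      = ENNReal.ofReal (t ^ (-∑ i, α i)) • volume := by
  classical
  have hdet : (Matrix.diagonal fun i ↦ t ^ α i).det = t ^ ∑ i, α i := by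
    rw [Matrix.det_diagonal, Real.rpow_sum_of_pos ht]
  have hfactor : anisotropicDilation α x t
      = (fun z ↦ (fun i ↦ x i - t ^ α i * x i) + z) ∘
        Matrix.toLin' (Matrix.diagonal fun i ↦ t ^ α i) := by
    ext z i
    simp only [anisotropicDilation, Function.comp_apply, Pi.add_apply, Matrix.toLin'_apply,
      Matrix.mulVec_diagonal]
    ring
  rw [hfactor, ← Measure.map_map (measurable_const_add _) (by fun_prop),
    Real.map_matrix_volume_pi_eq_smul_volume_pi (by rw [hdet]; positivity),
    Measure.map_smul, map_add_left_eq_self, hdet, Real.rpow_neg ht.le, abs_of_pos (by positivity)]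

end Dilation

section Average

variable {Ω : Type*} [MeasurableSpace Ω] {μ : Measure Ω} {s t : Set Ω}

lemma map_cond_le_smul_cond {φ : Ω → Ω} {c : ℝ≥0∞} (hφ : Measurable φ) (hs : MeasurableSet s)
    (hmaps : MapsTo φ s s) (hμ : μ.map φ ≤ c • μ) : (μ[|s]).map φ ≤ c • μ[|s] := by
  simp only [ProbabilityTheory.cond, Measure.map_smul, smul_comm c]
  gcongr
  calc (μ.restrict s).map φ ≤ (μ.restrict (φ ⁻¹' s)).map φ :=
        Measure.map_mono (Measure.restrict_mono_set μ hmaps) hφ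
    _ = (μ.map φ).restrict s := (Measure.restrict_map hφ hs).symm
    _ ≤ (c • μ).restrict s := Measure.restrict_mono_measure hμ s
    _ = c • μ.restrict s := Measure.restrict_smul c μ s

lemma cond_le_smul_cond_of_subset (hst : s ⊆ t) (ht₀ : μ t ≠ 0) (ht : μ t ≠ ∞) :
    μ[|s] ≤ (μ t / μ s) • μ[|t] := by
  have hc : (μ t / μ s) * (μ t)⁻¹ = (μ s)⁻¹ := by
    rw [div_eq_mul_inv, mul_right_comm, ENNReal.mul_inv_cancel ht₀ ht, one_mul]
  simp only [ProbabilityTheory.cond, smul_smul, hc]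
  gcongr

lemma eLpNorm_cond {ε : Type*} [TopologicalSpace ε] [ContinuousENorm ε] (hs₀ : μ s ≠ 0)
    (hs : μ s ≠ ∞) (f : Ω → ε) (q : ℝ≥0∞) :
    eLpNorm f q (μ[|s])
      = ENNReal.ofReal (μ.real s ^ (-(1 / q).toReal)) * eLpNorm f q (μ.restrict s) := by
  rw [ProbabilityTheory.cond, eLpNorm_smul_measure_of_ne_zero (ENNReal.inv_ne_zero.2 hs),
    smul_eq_mul, measureReal_def, ← ENNReal.ofReal_rpow_of_pos (ENNReal.toReal_pos hs₀ hs),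
    ENNReal.ofReal_toReal hs, ENNReal.inv_rpow, ENNReal.rpow_neg]

end Average

section Exponent

variable {ι : Type*} [Fintype ι] {p : ι → ℝ≥0∞}

/-- The scaling exponents adapted to the integrability exponents `p`. They are chosen to satisfy
`α i - (∑ j, α j) / p i = 1`, so that `t ^ (α i - 1)`, from the speed of an anisotropic dilation,
cancels the factor `t ^ (-(∑ j, α j) / p i)` it costs in `L ^ (p i)`. -/
noncomputable def anisotropicExponent (p : ι → ℝ≥0∞) (i : ι) : ℝ :=
  1 + Fintype.card ι / (1 - ∑ j, (1 / p j).toReal) * (1 / p i).toReal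

lemma one_div_ne_top_of_sum_one_div_lt_one (hp : ∑ i, 1 / p i < 1) (i : ι) : 1 / p i ≠ ∞ :=
  ((ENNReal.sum_ne_top.1 (hp.trans ENNReal.one_lt_top).ne) i (Finset.mem_univ i))

lemma one_le_of_sum_one_div_lt_one (hp : ∑ i, 1 / p i < 1) (i : ι) : 1 ≤ p i := by
  have hi : 1 / p i ≤ 1 :=
    (Finset.single_le_sum (fun _ _ ↦ zero_le) (Finset.mem_univ i)).trans hp.le
  rwa [one_div, ENNReal.inv_le_one] at hi

lemma sum_toReal_one_div_lt_one (hp : ∑ i, 1 / p i < 1) : ∑ i, (1 / p i).toReal < 1 := by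
  rw [← ENNReal.toReal_sum fun i _ ↦ one_div_ne_top_of_sum_one_div_lt_one hp i]
  exact ENNReal.toReal_lt_of_lt_ofReal (by simpa using hp)

lemma one_le_anisotropicExponent (hp : ∑ i, 1 / p i < 1) (i : ι) :
    1 ≤ anisotropicExponent p i := by
  have := sum_toReal_one_div_lt_one hp
  exact le_add_of_nonneg_right
    (mul_nonneg (div_nonneg (Nat.cast_nonneg _) (by linarith)) ENNReal.toReal_nonneg)

lemma anisotropicExponent_sub_sum_mul (hp : ∑ i, 1 / p i < 1) (i : ι) :
    anisotropicExponent p i - (∑ j, anisotropicExponent p j) * (1 / p i).toReal = 1 := by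
  have hpos : 1 - ∑ j, (1 / p j).toReal ≠ 0 := (sub_pos.2 (sum_toReal_one_div_lt_one hp)).ne'
  have hsum : ∑ j, anisotropicExponent p j
      = Fintype.card ι / (1 - ∑ j, (1 / p j).toReal) := by
    simp only [anisotropicExponent, Finset.sum_add_distrib, ← Finset.mul_sum, Finset.sum_const,
      Finset.card_univ, nsmul_eq_mul, mul_one]
    field_simp
    ring
  rw [hsum, anisotropicExponent]
  ring

end Exponent

section Box

variable {ι : Type*} {a b : ι → ℝ}

lemma uniqueDiffOn_Icc_pi (hab : ∀ i, a i < b i) : UniqueDiffOn ℝ (Icc a b) := by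
  rw [← pi_univ_Icc]
  exact UniqueDiffOn.univ_pi fun i ↦ uniqueDiffOn_Icc (hab i)

variable [Fintype ι]

lemma volume_Icc_pi_ne_zero (hab : ∀ i, a i < b i) : volume (Icc a b) ≠ 0 := by
  rw [Real.volume_Icc_pi]
  exact Finset.prod_ne_zero_iff.2 fun i _ ↦ by simpa using hab i

lemma volume_Icc_pi_ne_top : volume (Icc a b) ≠ ∞ :=
  isCompact_Icc.measure_lt_top.ne

lemma isProbabilityMeasure_cond_Icc (hab : ∀ i, a i < b i) :
    IsProbabilityMeasure (volume[|Icc a b]) :=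
  ProbabilityTheory.cond_isProbabilityMeasure_of_finite (volume_Icc_pi_ne_zero hab)
    volume_Icc_pi_ne_top

end Box

section Derivative

variable {E F : Type*} [NormedAddCommGroup E] [NormedSpace ℝ E]
  [NormedAddCommGroup F] [NormedSpace ℝ F]

lemma fderivWithin_ae_eq_fderiv_of_null_frontier [MeasurableSpace F] [OpensMeasurableSpace F]
    {μ : Measure F} {s : Set F} (hs : μ (frontier s) = 0) (u : F → E) :
    fderivWithin ℝ u s =ᵐ[μ.restrict s] fderiv ℝ u := by
  rw [← Measure.restrict_congr_set (interior_ae_eq_of_null_frontier hs)]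
  filter_upwards [ae_restrict_mem isOpen_interior.measurableSet] with z hz
  exact fderivWithin_of_mem_nhds (mem_interior_iff_mem_nhds.1 hz)

variable {ι : Type*} [Fintype ι] {a b : ι → ℝ} {u : (ι → ℝ) → E}

lemma enorm_apply_le_sum_single [DecidableEq ι] (L : (ι → ℝ) →L[ℝ] E)
    (v : ι → ℝ) : ‖L v‖ₑ ≤ ∑ i, ‖v i‖ₑ * ‖L (Pi.single i 1)‖ₑ := by
  calc ‖L v‖ₑ = ‖∑ i, v i • L (Pi.single i 1)‖ₑ := by
        conv_lhs => rw [pi_eq_sum_univ' v]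
        simp only [map_sum, map_smul]
    _ ≤ ∑ i, ‖v i • L (Pi.single i 1)‖ₑ := enorm_sum_le _ _
    _ = ∑ i, ‖v i‖ₑ * ‖L (Pi.single i 1)‖ₑ := by simp only [enorm_smul]

lemma continuousOn_fderivWithin_apply_Icc_pi (hab : ∀ i, a i < b i)
    (hu : ContDiffOn ℝ 1 u (Icc a b)) (v : ι → ℝ) :
    ContinuousOn (fun z ↦ fderivWithin ℝ u (Icc a b) z v) (Icc a b) :=
  (hu.continuousOn_fderivWithin (uniqueDiffOn_Icc_pi hab) le_rfl).clm_apply continuousOn_const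

lemma fderivWithin_apply_ae_eq_fderiv_apply_Icc_pi (a b : ι → ℝ) (u : (ι → ℝ) → E)
    (v : ι → ℝ) :
    (fun z ↦ fderivWithin ℝ u (Icc a b) z v) =ᵐ[volume.restrict (Icc a b)]
      fun z ↦ fderiv ℝ u z v :=
  (fderivWithin_ae_eq_fderiv_of_null_frontier ((convex_Icc a b).addHaar_frontier volume) u).mono
    fun _ hz ↦ DFunLike.congr_fun hz v

lemma eLpNorm_fderiv_apply_restrict_Icc_ne_top (hab : ∀ i, a i < b i)
    (hu : ContDiffOn ℝ 1 u (Icc a b)) (v : ι → ℝ) (q : ℝ≥0∞) :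
    eLpNorm (fun z ↦ fderiv ℝ u z v) q (volume.restrict (Icc a b)) ≠ ∞ := by
  have hcont := continuousOn_fderivWithin_apply_Icc_pi hab hu v
  obtain ⟨C, hC⟩ := isCompact_Icc.exists_bound_of_continuousOn hcont
  have : IsFiniteMeasure (volume.restrict (Icc a b)) := ⟨by simpa using volume_Icc_pi_ne_top.lt_top⟩
  rw [← eLpNorm_congr_ae (fderivWithin_apply_ae_eq_fderiv_apply_Icc_pi a b u v)]
  exact (MemLp.of_bound (hcont.aestronglyMeasurable_of_isCompact isCompact_Icc measurableSet_Icc) C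
    ((ae_restrict_mem measurableSet_Icc).mono hC)).2.ne

end Derivative

section Oscillation

variable {ι : Type*} [Fintype ι] {E : Type*} [NormedAddCommGroup E] {a b x y z α : ι → ℝ}
  {p : ι → ℝ≥0∞}

lemma lintegral_enorm_comp_anisotropicDilation_le (hab : ∀ i, a i < b i) (hα : ∀ i, 0 ≤ α i)
    {g : (ι → ℝ) → E} (hg : AEStronglyMeasurable g (volume[|Icc a b])) {q : ℝ≥0∞} (hq : 1 ≤ q)
    (hx : x ∈ Icc a b) {t : ℝ} (ht : t ∈ Ioc (0 : ℝ) 1) :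
    ∫⁻ z, ‖g (anisotropicDilation α x t z)‖ₑ ∂volume[|Icc a b]
      ≤ ENNReal.ofReal (t ^ (-((∑ i, α i) * (1 / q).toReal))) * eLpNorm g q (volume[|Icc a b]) := by
  have := isProbabilityMeasure_cond_Icc hab
  set μ := volume[|Icc a b]
  set φ := anisotropicDilation α x t
  have hφ : Measurable φ :=
    ((continuous_anisotropicDilation hα).comp (Continuous.prodMk_left t)).measurable
  have hmap : μ.map φ ≤ ENNReal.ofReal (t ^ (-∑ i, α i)) • μ :=
    map_cond_le_smul_cond hφ measurableSet_Icc
      (fun z hz ↦ anisotropicDilation_mem_Icc hα hx hz ⟨ht.1.le, ht.2⟩)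
      (map_anisotropicDilation_volume α x ht.1).le
  have hgφ : AEStronglyMeasurable g (μ.map φ) :=
    hg.mono_ac (Measure.absolutelyContinuous_of_le_smul hmap)
  calc ∫⁻ z, ‖g (φ z)‖ₑ ∂μ = eLpNorm (g ∘ φ) 1 μ := eLpNorm_one_eq_lintegral_enorm.symm
    _ ≤ eLpNorm (g ∘ φ) q μ :=
        eLpNorm_le_eLpNorm_of_exponent_le hq (hgφ.comp_measurable hφ)
    _ = eLpNorm g q (μ.map φ) := (eLpNorm_map_measure hgφ hφ.aemeasurable).symm
    _ ≤ ENNReal.ofReal (t ^ (-∑ i, α i)) ^ (1 / q).toReal * eLpNorm g q μ :=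
        eLpNorm_le_of_measure_le_smul hmap
    _ = _ := by
        rw [ENNReal.ofReal_rpow_of_pos (Real.rpow_pos_of_pos ht.1 _), ← Real.rpow_mul ht.1.le,
          neg_mul]

lemma aemeasurable_enorm_comp_anisotropicDilation (hα : ∀ i, 0 ≤ α i) {g : (ι → ℝ) → E}
    (hg : ContinuousOn g (Icc a b)) (hx : x ∈ Icc a b) :
    AEMeasurable (fun w : (ι → ℝ) × ℝ ↦ ‖g (anisotropicDilation α x w.2 w.1)‖ₑ)
      (volume[|Icc a b].prod (volume.restrict (Ioc (0 : ℝ) 1))) := by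
  have hac : volume[|Icc a b].prod (volume.restrict (Ioc (0 : ℝ) 1))
      ≪ (volume.prod volume).restrict (Icc a b ×ˢ Ioc (0 : ℝ) 1) := by
    rw [← Measure.prod_restrict]
    exact Measure.smul_absolutelyContinuous.prod .rfl
  have hcont : ContinuousOn (fun w : (ι → ℝ) × ℝ ↦ g (anisotropicDilation α x w.2 w.1))
      (Icc a b ×ˢ Ioc (0 : ℝ) 1) :=
    hg.comp (continuous_anisotropicDilation hα).continuousOn fun w hw ↦
      anisotropicDilation_mem_Icc hα hx hw.1 (Ioc_subset_Icc_self hw.2)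
  exact ((continuous_enorm.comp_continuousOn hcont).aemeasurable
    (measurableSet_Icc.prod measurableSet_Ioc)).mono_ac hac

lemma lintegral_rpow_mul_enorm_comp_anisotropicDilation_le (hab : ∀ i, a i < b i)
    (hp : ∑ i, 1 / p i < 1) {g : (ι → ℝ) → E} (hg : ContinuousOn g (Icc a b))
    (hx : x ∈ Icc a b) (i : ι) :
    ∫⁻ w, ENNReal.ofReal (w.2 ^ (anisotropicExponent p i - 1)) *
        ‖g (anisotropicDilation (anisotropicExponent p) x w.2 w.1)‖ₑ
        ∂volume[|Icc a b].prod (volume.restrict (Ioc (0 : ℝ) 1))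
      ≤ eLpNorm g (p i) (volume[|Icc a b]) := by
  have := isProbabilityMeasure_cond_Icc hab
  have hα j : 0 ≤ anisotropicExponent p j := zero_le_one.trans (one_le_anisotropicExponent hp j)
  have hmeas : AEStronglyMeasurable g (volume[|Icc a b]) :=
    (hg.aestronglyMeasurable_of_isCompact isCompact_Icc measurableSet_Icc).smul_measure _
  refine (lintegral_prod_symm _ (.mul (by fun_prop)
    (aemeasurable_enorm_comp_anisotropicDilation hα hg hx))).trans_le ?_
  calc ∫⁻ t in Ioc (0 : ℝ) 1, ∫⁻ z, ENNReal.ofReal (t ^ (anisotropicExponent p i - 1)) *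
        ‖g (anisotropicDilation (anisotropicExponent p) x t z)‖ₑ ∂volume[|Icc a b]
      ≤ ∫⁻ _ in Ioc (0 : ℝ) 1, eLpNorm g (p i) (volume[|Icc a b]) := by
        refine setLIntegral_mono' measurableSet_Ioc fun t ht ↦ ?_
        have hcancel : t ^ (anisotropicExponent p i - 1) *
            t ^ (-((∑ j, anisotropicExponent p j) * (1 / p i).toReal)) = 1 := by
          rw [← Real.rpow_add ht.1, ← sub_eq_add_neg, sub_right_comm,
            anisotropicExponent_sub_sum_mul hp, sub_self, Real.rpow_zero]
        rw [lintegral_const_mul' _ _ ENNReal.ofReal_ne_top]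
        grw [lintegral_enorm_comp_anisotropicDilation_le hab hα hmeas
          (one_le_of_sum_one_div_lt_one hp i) hx ht]
        rw [← mul_assoc, ← ENNReal.ofReal_mul (Real.rpow_nonneg ht.1.le _), hcancel,
          ENNReal.ofReal_one, one_mul]
    _ = eLpNorm g (p i) (volume[|Icc a b]) := by simp

variable [NormedSpace ℝ E] [DecidableEq ι] {u : (ι → ℝ) → E}

lemma enorm_sub_le_lintegral_fderivWithin_anisotropicDilation (hα : ∀ i, 1 ≤ α i)
    (hu : ContDiffOn ℝ 1 u (Icc a b)) (hx : x ∈ Icc a b) (hz : z ∈ Icc a b) :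
    ‖u x - u z‖ₑ ≤ ∫⁻ t in Ioc (0 : ℝ) 1, ∑ i, ENNReal.ofReal (α i * (b i - a i)) *
      (ENNReal.ofReal (t ^ (α i - 1)) *
        ‖fderivWithin ℝ u (Icc a b) (anisotropicDilation α x t z) (Pi.single i 1)‖ₑ) := by
  rw [restrict_Ioc_eq_restrict_Icc]
  set γ : ℝ → ι → ℝ := fun t ↦ anisotropicDilation α x t z
  have hα₀ i : 0 ≤ α i := zero_le_one.trans (hα i)
  have hγ : MapsTo γ (Icc 0 1) (Icc a b) := fun t ht ↦ anisotropicDilation_mem_Icc hα₀ hx hz ht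
  have hend : ‖u x - u z‖ₑ = ‖(u ∘ γ) 1 - (u ∘ γ) 0‖ₑ := by
    simp only [γ, Function.comp_apply, anisotropicDilation_one,
      anisotropicDilation_zero fun i ↦ (zero_lt_one.trans_le (hα i)).ne', enorm_sub_rev]
  rw [hend]
  refine (enorm_sub_le_lintegral_derivWithin_Icc_of_contDiffOn_Icc
    (hu.comp (contDiff_anisotropicDilation hα).contDiffOn hγ) zero_le_one).trans
    (setLIntegral_mono' measurableSet_Icc fun t ht ↦ ?_)
  have hchain : derivWithin (u ∘ γ) (Icc 0 1) t = fderivWithin ℝ u (Icc a b) (γ t)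
      fun i ↦ α i * t ^ (α i - 1) * (z i - x i) :=
    (((hu.differentiableOn one_ne_zero) _ (hγ ht)).hasFDerivWithinAt.comp_hasDerivWithinAt t
      (hasDerivAt_anisotropicDilation hα t).hasDerivWithinAt hγ).derivWithin
      (uniqueDiffOn_Icc zero_lt_one t ht)
  rw [hchain]
  refine (enorm_apply_le_sum_single _ _).trans (Finset.sum_le_sum fun i _ ↦ ?_)
  have hside : |z i - x i| ≤ b i - a i :=
    abs_sub_le_of_le_of_le (hz.1 i) (hz.2 i) (hx.1 i) (hx.2 i)
  have ht₀ : 0 ≤ t ^ (α i - 1) := Real.rpow_nonneg ht.1 _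
  have hspeed : ‖α i * t ^ (α i - 1) * (z i - x i)‖ₑ
      ≤ ENNReal.ofReal (α i * (b i - a i)) * ENNReal.ofReal (t ^ (α i - 1)) := by
    rw [Real.enorm_eq_ofReal_abs, abs_mul, abs_of_nonneg (mul_nonneg (hα₀ i) ht₀),
      ← ENNReal.ofReal_mul' ht₀, mul_right_comm]
    gcongr
    exact hα₀ i
  grw [hspeed, mul_assoc]

lemma lintegral_enorm_sub_cond_Icc_le (hab : ∀ i, a i < b i) (hp : ∑ i, 1 / p i < 1)
    (hu : ContDiffOn ℝ 1 u (Icc a b)) (hx : x ∈ Icc a b) :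
    ∫⁻ z, ‖u x - u z‖ₑ ∂volume[|Icc a b] ≤
      ∑ i, ENNReal.ofReal (anisotropicExponent p i * (b i - a i)) *
        eLpNorm (fun z ↦ fderivWithin ℝ u (Icc a b) z (Pi.single i 1)) (p i)
          (volume[|Icc a b]) := by
  have := isProbabilityMeasure_cond_Icc hab
  set α := anisotropicExponent p
  have hα : ∀ i, 1 ≤ α i := one_le_anisotropicExponent hp
  have hcont (i : ι) := continuousOn_fderivWithin_apply_Icc_pi hab hu (Pi.single i 1)
  have hmeas (i : ι) : AEMeasurable (fun w : (ι → ℝ) × ℝ ↦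
      ENNReal.ofReal (α i * (b i - a i)) * (ENNReal.ofReal (w.2 ^ (α i - 1)) *
        ‖fderivWithin ℝ u (Icc a b) (anisotropicDilation α x w.2 w.1) (Pi.single i 1)‖ₑ))
      (volume[|Icc a b].prod (volume.restrict (Ioc (0 : ℝ) 1))) :=
    ((AEMeasurable.mul (by fun_prop) (aemeasurable_enorm_comp_anisotropicDilation
      (fun j ↦ zero_le_one.trans (hα j)) (hcont i) hx))).const_mul _
  refine (lintegral_mono_ae ((ProbabilityTheory.ae_cond_mem measurableSet_Icc).mono fun z hz ↦
    enorm_sub_le_lintegral_fderivWithin_anisotropicDilation hα hu hx hz)).trans ?_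
  rw [← lintegral_prod _ (Finset.aemeasurable_fun_sum _ fun i _ ↦ hmeas i),
    lintegral_finsetSum' _ fun i _ ↦ hmeas i]
  refine Finset.sum_le_sum fun i _ ↦ ?_
  rw [lintegral_const_mul' _ _ ENNReal.ofReal_ne_top]
  gcongr
  exact lintegral_rpow_mul_enorm_comp_anisotropicDilation_le hab hp (hcont i) hx i

lemma enorm_sub_le_sum_eLpNorm_cond_Icc (hab : ∀ i, a i < b i) (hp : ∑ i, 1 / p i < 1)
    (hu : ContDiffOn ℝ 1 u (Icc a b)) (hx : x ∈ Icc a b) (hy : y ∈ Icc a b) :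
    ‖u x - u y‖ₑ ≤ 2 * ∑ i, ENNReal.ofReal (anisotropicExponent p i * (b i - a i)) *
      eLpNorm (fun z ↦ fderiv ℝ u z (Pi.single i 1)) (p i) (volume[|Icc a b]) := by
  have := isProbabilityMeasure_cond_Icc hab
  have hnorm i : eLpNorm (fun z ↦ fderivWithin ℝ u (Icc a b) z (Pi.single i 1)) (p i)
      (volume[|Icc a b]) = eLpNorm (fun z ↦ fderiv ℝ u z (Pi.single i 1)) (p i)
        (volume[|Icc a b]) :=
    eLpNorm_congr_ae <| Measure.smul_absolutelyContinuous.ae_le <|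
      fderivWithin_apply_ae_eq_fderiv_apply_Icc_pi a b u (Pi.single i 1)
  have hmeas : AEMeasurable (fun z ↦ ‖u x - u z‖ₑ) (volume[|Icc a b]) :=
    ((continuous_enorm.comp_continuousOn
      (continuousOn_const.sub hu.continuousOn)).aemeasurable measurableSet_Icc).smul_measure _
  calc ‖u x - u y‖ₑ = ∫⁻ _, ‖u x - u y‖ₑ ∂volume[|Icc a b] := by simp
    _ ≤ ∫⁻ z, ‖u x - u z‖ₑ + ‖u y - u z‖ₑ ∂volume[|Icc a b] := lintegral_mono fun z ↦ by
        rw [enorm_sub_rev (u y)]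
        exact (congrArg _ (sub_add_sub_cancel _ (u z) _).symm).trans_le (enorm_add_le _ _)
    _ = ∫⁻ z, ‖u x - u z‖ₑ ∂volume[|Icc a b] + ∫⁻ z, ‖u y - u z‖ₑ ∂volume[|Icc a b] :=
        lintegral_add_left' hmeas _
    _ ≤ _ := by
        simp only [← hnorm, two_mul]
        exact add_le_add (lintegral_enorm_sub_cond_Icc_le hab hp hu hx)
          (lintegral_enorm_sub_cond_Icc_le hab hp hu hy)

end Oscillation

section Gauge

variable {ι : Type*} [Fintype ι] {a b x y α L : ι → ℝ}

/-- The anisotropic quasi-distance: the least `s ≥ 0` such that, for every `i`, the points `x` and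
`y` are at most `s ^ α i * L i` apart in the `i`-th coordinate. -/
noncomputable def anisotropicGauge (α L x y : ι → ℝ) : ℝ :=
  ‖fun i ↦ (|x i - y i| / L i) ^ (α i)⁻¹‖

lemma anisotropicGauge_nonneg (α L x y : ι → ℝ) : 0 ≤ anisotropicGauge α L x y :=
  norm_nonneg _

lemma anisotropicGauge_comm (α L x y : ι → ℝ) :
    anisotropicGauge α L x y = anisotropicGauge α L y x := by
  simp only [anisotropicGauge, abs_sub_comm]

lemma anisotropicGauge_self (hα : ∀ i, α i ≠ 0) (L x : ι → ℝ) :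
    anisotropicGauge α L x x = 0 := by
  simp [anisotropicGauge, Real.zero_rpow (inv_ne_zero (hα _)), ← Pi.zero_def]

lemma continuous_anisotropicGauge (hα : ∀ i, 0 ≤ α i) (L : ι → ℝ) :
    Continuous fun w : (ι → ℝ) × (ι → ℝ) ↦ anisotropicGauge α L w.1 w.2 :=
  (continuous_pi fun i ↦
    (Real.continuous_rpow_const (inv_nonneg.2 (hα i))).comp (by fun_prop)).norm

lemma abs_sub_le_anisotropicGauge_rpow_mul {i : ι} (hα : 0 < α i) (hL : 0 < L i) :
    |x i - y i| ≤ anisotropicGauge α L x y ^ α i * L i := by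
  have hratio : 0 ≤ |x i - y i| / L i := by positivity
  rw [← div_le_iff₀ hL, ← Real.rpow_inv_le_iff_of_pos hratio (anisotropicGauge_nonneg ..) hα]
  exact (le_abs_self _).trans (norm_le_pi_norm (fun i ↦ (|x i - y i| / L i) ^ (α i)⁻¹) i)

lemma anisotropicGauge_pos (hα : ∀ i, 0 < α i) (hL : ∀ i, 0 < L i) (hxy : x ≠ y) :
    0 < anisotropicGauge α L x y := by
  refine (anisotropicGauge_nonneg ..).lt_of_ne fun hzero ↦ hxy (funext fun i ↦ ?_)
  have hi := abs_sub_le_anisotropicGauge_rpow_mul (x := x) (y := y) (hα i) (hL i)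
  rw [← hzero, Real.zero_rpow (hα i).ne', zero_mul] at hi
  exact sub_eq_zero.1 (abs_nonpos_iff.1 hi)

lemma anisotropicGauge_le_one (hα : ∀ i, 0 ≤ α i) (hx : x ∈ Icc a b) (hy : y ∈ Icc a b) :
    anisotropicGauge α (b - a) x y ≤ 1 := by
  refine (pi_norm_le_iff_of_nonneg zero_le_one).2 fun i ↦ ?_
  have hside : 0 ≤ (b - a) i := sub_nonneg.2 ((hx.1 i).trans (hx.2 i))
  have hratio : |x i - y i| / (b - a) i ≤ 1 :=
    div_le_one_of_le₀ (abs_sub_le_of_le_of_le (hx.1 i) (hx.2 i) (hy.1 i) (hy.2 i)) hside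
  have hratio₀ : 0 ≤ |x i - y i| / (b - a) i := by positivity
  rw [Real.norm_of_nonneg (Real.rpow_nonneg hratio₀ _)]
  exact Real.rpow_le_one hratio₀ hratio (inv_nonneg.2 (hα i))

end Gauge

section SubBox

lemma exists_mem_Icc_add_of_abs_sub_le {a b x y δ : ℝ} (hx : x ∈ Icc a b) (hy : y ∈ Icc a b)
    (hxy : |x - y| ≤ δ) (hδ : δ ≤ b - a) :
    ∃ c, a ≤ c ∧ c + δ ≤ b ∧ x ∈ Icc c (c + δ) ∧ y ∈ Icc c (c + δ) := by
  refine ⟨min (min x y) (b - δ), ?_⟩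
  grind

lemma volume_Icc_pi_div_rescaled {ι : Type*} [Fintype ι] {a b : ι → ℝ} {s : ℝ}
    (hab : ∀ i, a i < b i) (hs : 0 < s) (α c : ι → ℝ) :
    volume (Icc a b) / volume (Icc c fun i ↦ c i + s ^ α i * (b i - a i))
      = ENNReal.ofReal (s ^ (-∑ i, α i)) := by
  have hside i : 0 < b i - a i := sub_pos.2 (hab i)
  have hprod : 0 < ∏ i, (b i - a i) := Finset.prod_pos fun i _ ↦ hside i
  simp only [Real.volume_Icc_pi, add_sub_cancel_left]
  rw [← ENNReal.ofReal_prod_of_nonneg fun i _ ↦ (hside i).le,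
    ← ENNReal.ofReal_prod_of_nonneg fun i _ ↦ mul_nonneg (Real.rpow_nonneg hs.le _) (hside i).le,
    Finset.prod_mul_distrib, ← Real.rpow_sum_of_pos hs, Real.rpow_neg hs.le,
    ← ENNReal.ofReal_div_of_pos (by positivity)]
  field_simp

end SubBox

section Embedding

variable {ι : Type*} [Fintype ι] {a b x y : ι → ℝ} {p : ι → ℝ≥0∞}

/-- The coefficient of the `i`-th partial derivative in the anisotropic Morrey inequality on the
box `Icc a b`. The power of the volume converts normalized `L ^ (p i)` norms to unnormalized
ones. -/
noncomputable def anisotropicModulus (p : ι → ℝ≥0∞) (a b : ι → ℝ) (i : ι) (x y : ι → ℝ) : ℝ :=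
  2 * (anisotropicExponent p i * (b i - a i)) * volume.real (Icc a b) ^ (-(1 / p i).toReal) *
    anisotropicGauge (anisotropicExponent p) (b - a) x y

lemma anisotropicModulus_nonneg (hab : a ≤ b) (hp : ∑ i, 1 / p i < 1) (i : ι) :
    0 ≤ anisotropicModulus p a b i x y := by
  have hα : 0 ≤ anisotropicExponent p i := zero_le_one.trans (one_le_anisotropicExponent hp i)
  have hside : 0 ≤ b i - a i := sub_nonneg.2 (hab i)
  have := anisotropicGauge_nonneg (anisotropicExponent p) (b - a) x y
  unfold anisotropicModulus
  positivity

lemma ofReal_anisotropicModulus (hab : a ≤ b) (hp : ∑ i, 1 / p i < 1) (i : ι) :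
    ENNReal.ofReal (anisotropicModulus p a b i x y)
      = 2 * ENNReal.ofReal (anisotropicExponent p i * (b i - a i)) *
        ENNReal.ofReal (volume.real (Icc a b) ^ (-(1 / p i).toReal)) *
        ENNReal.ofReal (anisotropicGauge (anisotropicExponent p) (b - a) x y) := by
  have hα : 0 ≤ anisotropicExponent p i := zero_le_one.trans (one_le_anisotropicExponent hp i)
  have hside : 0 ≤ b i - a i := sub_nonneg.2 (hab i)
  rw [anisotropicModulus, ENNReal.ofReal_mul (by positivity), ENNReal.ofReal_mul (by positivity),
    ENNReal.ofReal_mul zero_le_two, ENNReal.ofReal_ofNat]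

lemma anisotropicModulus_comm (p : ι → ℝ≥0∞) (a b : ι → ℝ) (i : ι) (x y : ι → ℝ) :
    anisotropicModulus p a b i x y = anisotropicModulus p a b i y x := by
  rw [anisotropicModulus, anisotropicGauge_comm, anisotropicModulus]

lemma anisotropicModulus_self (hp : ∑ i, 1 / p i < 1) (a b : ι → ℝ) (i : ι) (x : ι → ℝ) :
    anisotropicModulus p a b i x x = 0 := by
  rw [anisotropicModulus, anisotropicGauge_self fun i ↦
    (zero_lt_one.trans_le (one_le_anisotropicExponent hp i)).ne', mul_zero]

lemma continuous_anisotropicModulus (hp : ∑ i, 1 / p i < 1) (a b : ι → ℝ) (i : ι) :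
    Continuous fun w : (ι → ℝ) × (ι → ℝ) ↦ anisotropicModulus p a b i w.1 w.2 :=
  continuous_const.mul <| continuous_anisotropicGauge
    (fun i ↦ zero_le_one.trans (one_le_anisotropicExponent hp i)) _

lemma ofReal_rpow_mul_eLpNorm_cond_rescaled_le {ε : Type*} [TopologicalSpace ε]
    [ContinuousENorm ε] {c : ι → ℝ} {s : ℝ} (hab : ∀ i, a i < b i) (hp : ∑ i, 1 / p i < 1)
    (hs : 0 < s)
    (hsub : Icc c (fun j ↦ c j + s ^ anisotropicExponent p j * (b j - a j)) ⊆ Icc a b)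
    (f : (ι → ℝ) → ε) (i : ι) :
    ENNReal.ofReal (s ^ anisotropicExponent p i) * eLpNorm f (p i)
        (volume[|Icc c fun j ↦ c j + s ^ anisotropicExponent p j * (b j - a j)])
      ≤ ENNReal.ofReal s * eLpNorm f (p i) (volume[|Icc a b]) := by
  have hcond := cond_le_smul_cond_of_subset hsub (volume_Icc_pi_ne_zero hab) volume_Icc_pi_ne_top
  rw [volume_Icc_pi_div_rescaled hab hs] at hcond
  have hcancel : s ^ anisotropicExponent p i *
      (s ^ (-∑ j, anisotropicExponent p j)) ^ (1 / p i).toReal = s := by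
    rw [← Real.rpow_mul hs.le, ← Real.rpow_add hs, neg_mul, ← sub_eq_add_neg,
      anisotropicExponent_sub_sum_mul hp, Real.rpow_one]
  grw [eLpNorm_le_of_measure_le_smul hcond]
  rw [smul_eq_mul, ← mul_assoc, ENNReal.ofReal_rpow_of_pos (by positivity),
    ← ENNReal.ofReal_mul (by positivity), hcancel]

variable {E : Type*} [NormedAddCommGroup E] [NormedSpace ℝ E] [DecidableEq ι] {u : (ι → ℝ) → E}

lemma enorm_sub_le_sum_anisotropicGauge_mul_eLpNorm_cond_Icc (hab : ∀ i, a i < b i)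
    (hp : ∑ i, 1 / p i < 1) (hu : ContDiffOn ℝ 1 u (Icc a b)) (hx : x ∈ Icc a b)
    (hy : y ∈ Icc a b) :
    ‖u x - u y‖ₑ ≤ 2 * ∑ i, ENNReal.ofReal (anisotropicExponent p i * (b i - a i)) *
      (ENNReal.ofReal (anisotropicGauge (anisotropicExponent p) (b - a) x y) *
        eLpNorm (fun z ↦ fderiv ℝ u z (Pi.single i 1)) (p i) (volume[|Icc a b])) := by
  obtain rfl | hxy := eq_or_ne x y
  · simp
  set α := anisotropicExponent p
  have hα i : 0 < α i := zero_lt_one.trans_le (one_le_anisotropicExponent hp i)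
  have hside i : 0 < (b - a) i := sub_pos.2 (hab i)
  set s := anisotropicGauge α (b - a) x y
  have hs : 0 < s := anisotropicGauge_pos hα hside hxy
  have hs₁ : s ≤ 1 := anisotropicGauge_le_one (fun i ↦ (hα i).le) hx hy
  choose c hac hcb hxc hyc using fun i ↦ exists_mem_Icc_add_of_abs_sub_le
    ⟨hx.1 i, hx.2 i⟩ ⟨hy.1 i, hy.2 i⟩ (abs_sub_le_anisotropicGauge_rpow_mul (hα i) (hside i))
    (mul_le_of_le_one_left (hside i).le (Real.rpow_le_one hs.le hs₁ (hα i).le))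
  set d : ι → ℝ := fun i ↦ c i + s ^ α i * (b i - a i)
  have hsub : Icc c d ⊆ Icc a b := Icc_subset_Icc hac hcb
  have hcd i : c i < d i := lt_add_of_pos_right _ (mul_pos (Real.rpow_pos_of_pos hs _) (hside i))
  have hxcd : x ∈ Icc c d := ⟨fun i ↦ (hxc i).1, fun i ↦ (hxc i).2⟩
  have hycd : y ∈ Icc c d := ⟨fun i ↦ (hyc i).1, fun i ↦ (hyc i).2⟩
  grw [enorm_sub_le_sum_eLpNorm_cond_Icc hcd hp (hu.mono hsub) hxcd hycd]
  gcongr (2 * ∑ i, ?_) with i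
  have hlength : α i * (d i - c i) = α i * (b i - a i) * s ^ α i := by
    rw [add_sub_cancel_left, mul_assoc, mul_comm (s ^ α i)]
  rw [hlength, ENNReal.ofReal_mul' (Real.rpow_nonneg hs.le _), mul_assoc]
  grw [ofReal_rpow_mul_eLpNorm_cond_rescaled_le hab hp hs hsub]

theorem norm_sub_le_sum_eLpNorm_fderiv_mul_anisotropicModulus (hab : ∀ i, a i < b i)
    (hp : ∑ i, 1 / p i < 1) (hu : ContDiffOn ℝ 1 u (Icc a b)) (hx : x ∈ Icc a b)
    (hy : y ∈ Icc a b) :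
    ‖u x - u y‖ ≤ ∑ i,
      (eLpNorm (fun z ↦ fderiv ℝ u z (Pi.single i 1)) (p i) (volume.restrict (Icc a b))).toReal *
        anisotropicModulus p a b i x y := by
  have hmodulus i : 0 ≤ anisotropicModulus p a b i x y :=
    anisotropicModulus_nonneg (fun i ↦ (hab i).le) hp i
  rw [← ENNReal.ofReal_le_ofReal_iff (Finset.sum_nonneg fun i _ ↦
    mul_nonneg ENNReal.toReal_nonneg (hmodulus i)), ofReal_norm,
    ENNReal.ofReal_sum_of_nonneg fun i _ ↦ mul_nonneg ENNReal.toReal_nonneg (hmodulus i)]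
  simp only [ENNReal.ofReal_mul ENNReal.toReal_nonneg]
  refine (enorm_sub_le_sum_anisotropicGauge_mul_eLpNorm_cond_Icc hab hp hu hx hy).trans_eq ?_
  rw [Finset.mul_sum]
  refine Finset.sum_congr rfl fun i _ ↦ ?_
  rw [ofReal_anisotropicModulus (fun i ↦ (hab i).le) hp,
    eLpNorm_cond (volume_Icc_pi_ne_zero hab) volume_Icc_pi_ne_top,
    ENNReal.ofReal_toReal (eLpNorm_fderiv_apply_restrict_Icc_ne_top hab hu _ _)]
  ring

end Embedding

section Plane

lemma eLpNorm_fderiv_comp_continuousLinearEquiv {E F F' : Type*} [NormedAddCommGroup E]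
    [NormedSpace ℝ E] [NormedAddCommGroup F] [NormedSpace ℝ F] [MeasurableSpace F] [BorelSpace F]
    [NormedAddCommGroup F'] [NormedSpace ℝ F'] [MeasurableSpace F'] [BorelSpace F']
    {μ : Measure F} {ν : Measure F'} (e : F ≃L[ℝ] F') (he : MeasurePreserving e μ ν)
    (u : F' → E) (s : Set F') (v : F) (p : ℝ≥0∞) :
    eLpNorm (fun z ↦ fderiv ℝ (u ∘ e) z v) p (μ.restrict (e ⁻¹' s))
      = eLpNorm (fun z ↦ fderiv ℝ u z (e v)) p (ν.restrict s) := by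
  have hemb : MeasurableEmbedding e := e.toHomeomorph.measurableEmbedding
  rw [← (he.restrict_preimage_emb hemb s).map_eq, hemb.eLpNorm_map_measure]
  simp only [e.comp_right_fderiv]
  rfl

lemma finTwoArrow_preimage_Icc_prod_Icc (k l m n : ℝ) :
    ContinuousLinearEquiv.finTwoArrow ℝ ℝ ⁻¹' (Icc k l ×ˢ Icc m n) = Icc ![k, m] ![l, n] := by
  ext z
  simp [Pi.le_def, Fin.forall_fin_two, and_and_and_comm]

lemma norm_sub_le_eLpNorm_fderiv_mul_anisotropicModulus_prod {E : Type*} [NormedAddCommGroup E]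
    [NormedSpace ℝ E] {k l m n : ℝ} {p q : ℝ≥0∞} (hkl : k < l) (hmn : m < n)
    (hpq : 1 / p + 1 / q < 1) {u : ℝ × ℝ → E} (hu : ContDiffOn ℝ 1 u (Icc k l ×ˢ Icc m n))
    {P Q : ℝ × ℝ} (hP : P ∈ Icc k l ×ˢ Icc m n) (hQ : Q ∈ Icc k l ×ˢ Icc m n) :
    ‖u P - u Q‖ ≤
      (eLpNorm (fun z ↦ fderiv ℝ u z (1, 0)) p (volume.restrict (Icc k l ×ˢ Icc m n))).toReal *
        anisotropicModulus ![p, q] ![k, m] ![l, n] 0 ![P.1, P.2] ![Q.1, Q.2] +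
      (eLpNorm (fun z ↦ fderiv ℝ u z (0, 1)) q (volume.restrict (Icc k l ×ˢ Icc m n))).toReal *
        anisotropicModulus ![p, q] ![k, m] ![l, n] 1 ![P.1, P.2] ![Q.1, Q.2] := by
  set e := ContinuousLinearEquiv.finTwoArrow ℝ ℝ
  have hbox : e ⁻¹' (Icc k l ×ˢ Icc m n) = Icc ![k, m] ![l, n] :=
    finTwoArrow_preimage_Icc_prod_Icc k l m n
  have hsides : ∀ i, ![k, m] i < ![l, n] i := by simp [Fin.forall_fin_two, hkl, hmn]
  have hexp : ∑ i, 1 / ![p, q] i < 1 := by simpa using hpq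
  have hmem {S : ℝ × ℝ} (hS : S ∈ Icc k l ×ˢ Icc m n) : ![S.1, S.2] ∈ Icc ![k, m] ![l, n] :=
    hbox ▸ hS
  have hue : ContDiffOn ℝ 1 (u ∘ e) (Icc ![k, m] ![l, n]) :=
    hbox ▸ hu.comp_continuousLinearMap (e : (Fin 2 → ℝ) →L[ℝ] ℝ × ℝ)
  have hbound := norm_sub_le_sum_eLpNorm_fderiv_mul_anisotropicModulus hsides hexp hue
    (hmem hP) (hmem hQ)
  have he₀ : e (Pi.single 0 1) = (1, 0) := by simp [e]
  have he₁ : e (Pi.single 1 1) = (0, 1) := by simp [e]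
  rw [Fin.sum_univ_two, ← hbox, eLpNorm_fderiv_comp_continuousLinearEquiv e
    (volume_preserving_finTwoArrow ℝ), eLpNorm_fderiv_comp_continuousLinearEquiv e
    (volume_preserving_finTwoArrow ℝ), he₀, he₁] at hbound
  exact hbound

end Plane

theorem stmt_2_general (k l m n : ℝ) (p q : ℝ≥0∞) (hkl : k < l) (hmn : m < n)
    (hpq : 1 / p + 1 / q < 1) :
    ∃ G H : ℝ × ℝ → ℝ × ℝ → ℝ,
      Continuous (fun z : (ℝ × ℝ) × (ℝ × ℝ) ↦ G z.1 z.2) ∧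
      Continuous (fun z : (ℝ × ℝ) × (ℝ × ℝ) ↦ H z.1 z.2) ∧
      (∀ P Q, 0 ≤ G P Q ∧ 0 ≤ H P Q ∧ G P Q = G Q P ∧ H P Q = H Q P) ∧
      (∀ P, G P P = 0 ∧ H P P = 0) ∧
      ∀ (E : Type*) [NormedAddCommGroup E] [NormedSpace ℝ E] (u : ℝ × ℝ → E),
        ContDiffOn ℝ 1 u (Icc k l ×ˢ Icc m n) →
        ∀ P ∈ Icc k l ×ˢ Icc m n, ∀ Q ∈ Icc k l ×ˢ Icc m n,
          ‖u P - u Q‖ ≤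
            (eLpNorm (fun z ↦ fderiv ℝ u z (1, 0)) p
              (volume.restrict (Icc k l ×ˢ Icc m n))).toReal * G P Q
            + (eLpNorm (fun z ↦ fderiv ℝ u z (0, 1)) q
              (volume.restrict (Icc k l ×ˢ Icc m n))).toReal * H P Q := by
  have hexp : ∑ i, 1 / ![p, q] i < 1 := by simpa using hpq
  have hsides : ![k, m] ≤ ![l, n] := by simp [Pi.le_def, Fin.forall_fin_two, hkl.le, hmn.le]
  let M (i : Fin 2) (P Q : ℝ × ℝ) : ℝ :=
    anisotropicModulus ![p, q] ![k, m] ![l, n] i ![P.1, P.2] ![Q.1, Q.2]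
  have hcont (i : Fin 2) : Continuous fun z : (ℝ × ℝ) × (ℝ × ℝ) ↦ M i z.1 z.2 := by
    have := continuous_anisotropicModulus hexp ![k, m] ![l, n] i
    fun_prop
  have hnonneg (i P Q) : 0 ≤ M i P Q := anisotropicModulus_nonneg hsides hexp i
  have hcomm (i P Q) : M i P Q = M i Q P := anisotropicModulus_comm ..
  have hself (i P) : M i P P = 0 := anisotropicModulus_self hexp ..
  exact ⟨M 0, M 1, hcont 0, hcont 1,
    fun P Q ↦ ⟨hnonneg 0 P Q, hnonneg 1 P Q, hcomm 0 P Q, hcomm 1 P Q⟩,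
    fun P ↦ ⟨hself 0 P, hself 1 P⟩,
    fun _ _ _ _ hu _ hP _ hQ ↦
      norm_sub_le_eLpNorm_fderiv_mul_anisotropicModulus_prod hkl hmn hpq hu hP hQ⟩

/-- Theorem 2.3 (restricted to a rectangle): nonstandard Sobolev-type embedding with
different exponents for the two partial derivatives. -/
theorem stmt_2 (k l m n p q : ℝ) (hkl : k < l) (hmn : m < n)
    (hp : 1 < p) (hq : 1 < q) (hpq : 1 / p + 1 / q < 1) :
    ∀ R : Set (ℝ × ℝ), R = Icc k l ×ˢ Icc m n →
    ∃ G H : ℝ × ℝ → ℝ × ℝ → ℝ,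
      ContinuousOn (fun z : (ℝ × ℝ) × (ℝ × ℝ) => G z.1 z.2) (R ×ˢ R) ∧
      ContinuousOn (fun z : (ℝ × ℝ) × (ℝ × ℝ) => H z.1 z.2) (R ×ˢ R) ∧
      (∀ P ∈ R, ∀ Q ∈ R, 0 ≤ G P Q ∧ 0 ≤ H P Q ∧ G P Q = G Q P ∧ H P Q = H Q P) ∧
      (∀ P ∈ R, G P P = 0 ∧ H P P = 0) ∧
      ∀ u : ℝ × ℝ → ℝ, ContDiffOn ℝ 1 u R →
        ∀ P ∈ R, ∀ Q ∈ R,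
          |u P - u Q| ≤
            (eLpNorm (fun z => fderiv ℝ u z ((1 : ℝ), (0 : ℝ)))
                (ENNReal.ofReal p) (volume.restrict R)).toReal * G P Q
            + (eLpNorm (fun z => fderiv ℝ u z ((0 : ℝ), (1 : ℝ)))
                (ENNReal.ofReal q) (volume.restrict R)).toReal * H P Q := by
  rintro _ rfl
  have hexp : 1 / ENNReal.ofReal p + 1 / ENNReal.ofReal q < 1 := by
    rw [one_div, one_div, ← ENNReal.ofReal_inv_of_pos (by positivity),
      ← ENNReal.ofReal_inv_of_pos (by positivity), ← ENNReal.ofReal_add (by positivity)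
      (by positivity), ENNReal.ofReal_lt_one]
    simpa using hpq
  obtain ⟨G, H, hG, hH, hsymm, hdiag, hbound⟩ := stmt_2_general k l m n _ _ hkl hmn hexp
  exact ⟨G, H, hG.continuousOn, hH.continuousOn, fun P _ Q _ ↦ hsymm P Q, fun P _ ↦ hdiag P,
    hbound ℝ⟩
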